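/- Let K be a field of characteristic 0. Let P be a multilinear polynomial of degree 5 in one formal trilinear operation such that, in every Malcev dialgebra over K, P vanishes identically when the formal trilinear operation is interpreted as ⟨a,b,c⟩ = 2(ab)c + a(bc) + (ac)b. Then P vanishes identically in every Leibniz triple system over K; that is, P is a consequence of the defining identities of Leibniz triple systems. -/

import Mathlib

/-- Formal monomials of a single trilinear operation in variables
`x_0, …, x_{n-1}`: ternary trees whose leaves are labelled by variables. -/
inductive TTree (n : ℕ) : Type
  | leaf : Fin n → TTree n
  | node : TTree n → TTree n → TTree n → TTree n

namespace TTree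

/-- Evaluate a monomial in a system with trilinear operation `m`,
assigning the value `x i` to the variable `i`. -/
def eval {n : ℕ} {V : Type} (m : V → V → V → V) (x : Fin n → V) : TTree n → V
  | leaf i => x i
  | node s t u => m (eval m x s) (eval m x t) (eval m x u)

/-- The multiset of variables occurring in a monomial. -/
def vars {n : ℕ} : TTree n → Multiset (Fin n)
  | leaf i => {i}
  | node s t u => vars s + vars t + vars u

/-- A monomial of degree `n` is multilinear if each of the `n` variables
occurs in it exactly once. -/
def Multilinear {n : ℕ} (t : TTree n) : Prop :=
  vars t = (Finset.univ : Finset (Fin n)).val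

end TTree

namespace TTree

lemma odd_card_vars {n : ℕ} (t : TTree n) : Odd t.vars.card := by
  induction t with
  | leaf i => simp [vars]
  | node s t u hs ht hu =>
    simp only [vars, Multiset.card_add]
    exact (hs.add_odd ht).add_odd hu

lemma eq_leaf_of_card_vars {n : ℕ} {t : TTree n} (h : t.vars.card = 1) :
    ∃ i, t = leaf i := by
  cases t with
  | leaf i => exact ⟨i, rfl⟩
  | node s t u =>
    have hs := s.odd_card_vars.pos
    have ht := t.odd_card_vars.pos
    simp only [vars, Multiset.card_add] at h
    omega

lemma eq_node_of_card_vars {n : ℕ} {t : TTree n} (h : t.vars.card = 3) :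
    ∃ i j k, t = node (leaf i) (leaf j) (leaf k) := by
  cases t with
  | leaf i => simp [vars] at h
  | node s t u =>
    have hs := s.odd_card_vars.pos
    have ht := t.odd_card_vars.pos
    have hu := u.odd_card_vars.pos
    simp only [vars, Multiset.card_add] at h
    obtain ⟨i, rfl⟩ := eq_leaf_of_card_vars (t := s) (by omega)
    obtain ⟨j, rfl⟩ := eq_leaf_of_card_vars (t := t) (by omega)
    obtain ⟨k, rfl⟩ := eq_leaf_of_card_vars (t := u) (by omega)
    exact ⟨i, j, k, rfl⟩

/-- The three association types in degree 5. -/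
lemma exists_of_card_vars_eq_five {n : ℕ} {t : TTree n} (h : t.vars.card = 5) :
    ∃ a b c d e,
      t = node (node (leaf a) (leaf b) (leaf c)) (leaf d) (leaf e) ∨
      t = node (leaf a) (node (leaf b) (leaf c) (leaf d)) (leaf e) ∨
      t = node (leaf a) (leaf b) (node (leaf c) (leaf d) (leaf e)) := by
  cases t with
  | leaf i => simp [vars] at h
  | node s t u =>
    have hs := s.odd_card_vars
    have ht := t.odd_card_vars
    have hu := u.odd_card_vars
    simp only [vars, Multiset.card_add] at h
    rw [Nat.odd_iff] at hs ht hu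
    have hcases : (s.vars.card = 3 ∧ t.vars.card = 1 ∧ u.vars.card = 1) ∨
        (s.vars.card = 1 ∧ t.vars.card = 3 ∧ u.vars.card = 1) ∨
        (s.vars.card = 1 ∧ t.vars.card = 1 ∧ u.vars.card = 3) := by omega
    rcases hcases with ⟨h₁, h₂, h₃⟩ | ⟨h₁, h₂, h₃⟩ | ⟨h₁, h₂, h₃⟩
    · obtain ⟨a, b, c, rfl⟩ := eq_node_of_card_vars h₁
      obtain ⟨d, rfl⟩ := eq_leaf_of_card_vars h₂
      obtain ⟨e, rfl⟩ := eq_leaf_of_card_vars h₃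
      exact ⟨a, b, c, d, e, Or.inl rfl⟩
    · obtain ⟨a, rfl⟩ := eq_leaf_of_card_vars h₁
      obtain ⟨b, c, d, rfl⟩ := eq_node_of_card_vars h₂
      obtain ⟨e, rfl⟩ := eq_leaf_of_card_vars h₃
      exact ⟨a, b, c, d, e, Or.inr (Or.inl rfl)⟩
    · obtain ⟨a, rfl⟩ := eq_leaf_of_card_vars h₁
      obtain ⟨b, rfl⟩ := eq_leaf_of_card_vars h₂
      obtain ⟨c, d, e, rfl⟩ := eq_node_of_card_vars h₃
      exact ⟨a, b, c, d, e, Or.inr (Or.inr rfl)⟩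

end TTree

section HemisemidirectProduct

variable (K A : Type*) [Field K] [Ring A] [Algebra K A]

/-- The Leibniz product on `A × A`, where the second factor is `A` as a Lie algebra
and the first is `A` as a right module over it. -/
def hemisemidirect : A × A →ₗ[K] A × A →ₗ[K] A × A :=
  LinearMap.mk₂ K (fun p q => (p.1 * q.2, p.2 * q.2 - q.2 * p.2))
    (fun p p' q => by ext <;> simp <;> noncomm_ring)
    (fun k p q => by ext <;> simp [smul_sub])
    (fun p q q' => by ext <;> simp <;> noncomm_ring)
    (fun k p q => by ext <;> simp [smul_sub])

variable {A}

lemma hemisemidirect_apply (p q : A × A) :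
    hemisemidirect K A p q = (p.1 * q.2, p.2 * q.2 - q.2 * p.2) := rfl

lemma hemisemidirect_right_anticomm (a b c : A × A) :
    hemisemidirect K A a (hemisemidirect K A b c)
      + hemisemidirect K A a (hemisemidirect K A c b) = 0 := by
  ext <;> simp only [hemisemidirect_apply, Prod.fst_add, Prod.snd_add, Prod.fst_zero,
    Prod.snd_zero] <;> noncomm_ring

lemma hemisemidirect_diMalcev (a b c d : A × A) :
    let f := hemisemidirect K A
    f (f (f a b) c) d - f (f (f a d) b) c - f (f a (f c d)) b
      - f (f a c) (f b d) - f a (f (f b c) d) = 0 := by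
  ext <;> simp only [hemisemidirect_apply, Prod.fst_sub, Prod.snd_sub, Prod.fst_zero,
    Prod.snd_zero] <;> noncomm_ring

/-- In a Leibniz algebra the trilinear operation is three times the iterated product. -/
lemma hemisemidirect_triple (a b c : A × A) :
    let f := hemisemidirect K A
    (2 : K) • f (f a b) c + f a (f b c) + f (f a c) b = (3 : K) • f (f a b) c := by
  have h : hemisemidirect K A a (hemisemidirect K A b c)
      + hemisemidirect K A (hemisemidirect K A a c) b
      = hemisemidirect K A (hemisemidirect K A a b) c := by
    ext <;> simp only [hemisemidirect_apply, Prod.fst_add, Prod.snd_add] <;> noncomm_ring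
  intro f
  rw [add_assoc, h]
  module

end HemisemidirectProduct

section WordEvaluation

variable {K L : Type*} [Field K] [AddCommGroup L] [Module K L] {n : ℕ}

/-- The value of a word of length 5 as a left-normed iterated triple product
(and zero on words of other lengths). -/
def leftNormedWord (T : L →ₗ[K] L →ₗ[K] L →ₗ[K] L) (x : Fin n → L) :
    FreeMonoid (Fin n) → L := fun w =>
  match w.toList with
  | [a, b, c, d, e] => T (T (x a) (x b) (x c)) (x d) (x e)
  | _ => 0

/-- The linear extension of `leftNormedWord` to noncommutative polynomials. -/
noncomputable def leftNormed (T : L →ₗ[K] L →ₗ[K] L →ₗ[K] L) (x : Fin n → L) :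
    FreeAlgebra K (Fin n) →ₗ[K] L :=
  (FreeAlgebra.basisFreeMonoid K (Fin n)).constr K (leftNormedWord T x)

lemma leftNormed_word (T : L →ₗ[K] L →ₗ[K] L →ₗ[K] L) (x : Fin n → L) (a b c d e : Fin n) :
    leftNormed T x (FreeAlgebra.ι K a * FreeAlgebra.ι K b * FreeAlgebra.ι K c *
      FreeAlgebra.ι K d * FreeAlgebra.ι K e) = T (T (x a) (x b) (x c)) (x d) (x e) := by
  have h : FreeAlgebra.ι K a * FreeAlgebra.ι K b * FreeAlgebra.ι K c *
      FreeAlgebra.ι K d * FreeAlgebra.ι K e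
      = FreeAlgebra.basisFreeMonoid K (Fin n) (FreeMonoid.ofList [a, b, c, d, e]) := by
    simp [FreeAlgebra.basisFreeMonoid, FreeAlgebra.equivMonoidAlgebraFreeMonoid, mul_assoc]
  rw [h, leftNormed, Module.Basis.constr_basis]
  rfl

end WordEvaluation

/-- On multilinear monomials of degree 5, the Leibniz evaluation followed by `leftNormed` is nine
times the evaluation in a Leibniz triple system. -/
lemma leftNormed_eval {K L : Type} [Field K] [AddCommGroup L] [Module K L]
    (T : L →ₗ[K] L →ₗ[K] L →ₗ[K] L)
    (hmid : ∀ a b c d e : L,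
      T a (T b c d) e
        = T (T a b c) d e - T (T a c b) d e - T (T a d b) c e + T (T a d c) b e)
    (hright : ∀ a b c d e : L,
      T a b (T c d e)
        = T (T a b c) d e - T (T a b d) c e - T (T a b e) c d + T (T a b e) d c)
    (x : Fin 5 → L) {t : TTree 5} (ht : t.Multilinear) :
    leftNormed T x (t.eval (fun a b c => (3 : K) •
        hemisemidirect K _ (hemisemidirect K _ a b) c)
        (fun i => (FreeAlgebra.ι K i, FreeAlgebra.ι K i))).1
      = (9 : K) • t.eval (fun a b c => T a b c) x := by
  have hcard : t.vars.card = 5 := by rw [ht]; rfl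
  obtain ⟨a, b, c, d, e, rfl | rfl | rfl⟩ := TTree.exists_of_card_vars_eq_five hcard
  · simp only [TTree.eval, hemisemidirect_apply, Prod.smul_fst, map_smul,
      LinearMap.smul_apply, leftNormed_word]
    module
  · simp only [TTree.eval, hemisemidirect_apply, Prod.smul_fst, map_smul,
      LinearMap.smul_apply, sub_mul, mul_sub, ← mul_assoc, map_sub, leftNormed_word, hmid]
    module
  · simp only [TTree.eval, hemisemidirect_apply, Prod.smul_fst, map_smul,
      sub_mul, mul_sub, ← mul_assoc, map_sub, leftNormed_word, hright]
    module

/-- Over a field `K` of characteristic 0, every multilinear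
polynomial identity `P` of degree 5 (in one formal trilinear operation)
satisfied by the trilinear operation `⟨a,b,c⟩ = 2(ab)c + a(bc) + (ac)b` in
every Malcev dialgebra over `K` is satisfied in every Leibniz triple system
over `K`; that is, `P` is a consequence of the defining identities of Leibniz
triple systems. -/
theorem degree5_trilinear_identities (K : Type) [Field K] [CharZero K]
    (P : TTree 5 →₀ K) (hml : ∀ t ∈ P.support, t.Multilinear)
    (hvanish : ∀ (M : Type) [AddCommGroup M] [Module K M]
      (f : M →ₗ[K] M →ₗ[K] M),
      (∀ a b c : M, f a (f b c) + f a (f c b) = 0) →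
      (∀ a b c d : M,
        f (f (f a b) c) d - f (f (f a d) b) c - f (f a (f c d)) b
          - f (f a c) (f b d) - f a (f (f b c) d) = 0) →
      ∀ x : Fin 5 → M,
        P.sum (fun t k => k •
          TTree.eval (fun a b c =>
            (2 : K) • f (f a b) c + f a (f b c) + f (f a c) b) x t) = 0) :
    ∀ (L : Type) [AddCommGroup L] [Module K L]
      (T : L →ₗ[K] L →ₗ[K] L →ₗ[K] L),
      (∀ a b c d e : L,
        T a (T b c d) e
          = T (T a b c) d e - T (T a c b) d e - T (T a d b) c e
            + T (T a d c) b e) →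
      (∀ a b c d e : L,
        T a b (T c d e)
          = T (T a b c) d e - T (T a b d) c e - T (T a b e) c d
            + T (T a b e) d c) →
      ∀ x : Fin 5 → L,
        P.sum (fun t k => k • TTree.eval (fun a b c => T a b c) x t) = 0 := by
  intro L _ _ T hmid hright x
  have h := hvanish (FreeAlgebra K (Fin 5) × FreeAlgebra K (Fin 5)) (hemisemidirect K _)
    (hemisemidirect_right_anticomm K) (hemisemidirect_diMalcev K)
    (fun i => (FreeAlgebra.ι K i, FreeAlgebra.ι K i))
  simp only [hemisemidirect_triple] at h
  have h' := congrArg (leftNormed T x ∘ₗ LinearMap.fst K _ _) h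
  rw [map_zero, Finsupp.sum, map_sum] at h'
  have h9 : (9 : K) • P.sum (fun t k => k • TTree.eval (fun a b c => T a b c) x t) = 0 := by
    rw [← h', Finsupp.sum, Finset.smul_sum]
    refine Finset.sum_congr rfl fun t ht => ?_
    rw [map_smul, LinearMap.comp_apply, LinearMap.fst_apply,
      leftNormed_eval T hmid hright x (hml t ht), smul_comm]
  exact (smul_eq_zero.mp h9).resolve_left (by norm_num)
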